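/- arXiv:1511.02475 — 3 statements merged into one kernel-verified Lean document; each statement's English description precedes it below -/
import Mathlib

section
/- Let G be a bridgeless graph in which every vertex has degree 2 or 3, and assume exactly one vertex has degree 2 (all other vertices have degree 3). Then G has a 2-factor (a spanning 2-regular subgraph). -/
open scoped Classical

/-- A finite undirected multigraph (possibly with loops and parallel edges),
given by a vertex type, an edge type, and an endpoints map. -/
structure Multigraph where
  V : Type
  E : Type
  [fintV : Fintype V]
  [fintE : Fintype E]
  [decV : DecidableEq V]
  [decE : DecidableEq E]
  ends : E → Sym2 V

namespace Multigraph

attribute [instance] Multigraph.fintV Multigraph.fintE Multigraph.decV Multigraph.decE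

variable (G : Multigraph)

/-- The number of times `v` occurs as an endpoint of `e` (2 for a loop at `v`). -/
def incCount (v : G.V) (e : G.E) : ℕ :=
  if G.ends e = Sym2.diag v then 2 else if v ∈ G.ends e then 1 else 0

/-- Degree of a vertex (a loop contributes 2). -/
def degree (v : G.V) : ℕ := ∑ e : G.E, G.incCount v e

/-- The set `∂_G(v)` of edges incident to `v`. -/
def star (v : G.V) : Finset G.E := Finset.univ.filter fun e => v ∈ G.ends e

/-- No loops. -/
def Loopless : Prop := ∀ e : G.E, ¬ (G.ends e).IsDiag

/-- A cubic graph: loopless and 3-regular (parallel edges allowed). -/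
def Cubic : Prop := G.Loopless ∧ ∀ v : G.V, G.degree v = 3

/-- A cubic pseudo-graph: 3-regular, loops and parallel edges allowed. -/
def CubicPseudo : Prop := ∀ v : G.V, G.degree v = 3

/-- A simple graph: no loops and no parallel edges. -/
def Simple : Prop := G.Loopless ∧ ∀ e e' : G.E, G.ends e = G.ends e' → e = e'

/-- Two edges are adjacent if they are distinct and share an endpoint. -/
def EdgeAdj (e e' : G.E) : Prop :=
  e ≠ e' ∧ ∃ v : G.V, v ∈ G.ends e ∧ v ∈ G.ends e'

/-- A matching: a set of pairwise non-adjacent edges. -/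
def IsMatching (M : Set G.E) : Prop :=
  ∀ e ∈ M, ∀ e' ∈ M, e ≠ e' → ¬ ∃ v : G.V, v ∈ G.ends e ∧ v ∈ G.ends e'

/-- A perfect matching: a matching covering every vertex. -/
def IsPerfectMatching (M : Set G.E) : Prop :=
  G.IsMatching M ∧ ∀ v : G.V, ∃ e ∈ M, v ∈ G.ends e

/-- Degree of `v` within the spanning subgraph with edge set `A`. -/
noncomputable def degIn (A : Set G.E) (v : G.V) : ℕ :=
  ∑ e : G.E, if e ∈ A then G.incCount v e else 0

/-- `A` is the edge set of a `k`-factor: a spanning `k`-regular subgraph. -/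
def IsKFactor (k : ℕ) (A : Set G.E) : Prop := ∀ v : G.V, G.degIn A v = k

/-- `A` is the edge set of an even subgraph. -/
def EvenSubgraph (A : Set G.E) : Prop := ∀ v : G.V, Even (G.degIn A v)

/-- Reachability using only edges from `A`. -/
def Reach (A : Set G.E) : G.V → G.V → Prop :=
  Relation.ReflTransGen fun a b => ∃ e ∈ A, G.ends e = s(a, b)

/-- Connectedness. -/
def Connected : Prop := ∀ u v : G.V, G.Reach Set.univ u v

/-- A bridge: an edge whose removal disconnects its endpoints. -/
def IsBridge (e : G.E) : Prop :=
  ∀ u w : G.V, G.ends e = s(u, w) → ¬ G.Reach {e' | e' ≠ e} u w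

/-- The chromatic index: least number of colors of a proper edge coloring. -/
noncomputable def chromaticIndex : ℕ :=
  sInf {n | ∃ c : G.E → Fin n, ∀ e e', G.EdgeAdj e e' → c e ≠ c e'}

/-- A triangle on distinct vertices `u, v, w` with edges `e₁, e₂, e₃`. -/
def IsTriangle (e₁ e₂ e₃ : G.E) (u v w : G.V) : Prop :=
  u ≠ v ∧ v ≠ w ∧ u ≠ w ∧
    G.ends e₁ = s(u, v) ∧ G.ends e₂ = s(v, w) ∧ G.ends e₃ = s(u, w)

/-- Triangle-freeness. -/
def TriangleFree : Prop :=
  ¬ ∃ (e₁ e₂ e₃ : G.E) (u v w : G.V), G.IsTriangle e₁ e₂ e₃ u v w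

/-- An isomorphism of multigraphs. -/
structure Iso (G H : Multigraph) where
  vEquiv : G.V ≃ H.V
  eEquiv : G.E ≃ H.E
  ends_map : ∀ e : G.E, H.ends (eEquiv e) = (G.ends e).map vEquiv

/-- `G` and `H` are isomorphic. -/
def IsIsomorphicTo (G H : Multigraph) : Prop := Nonempty (Iso G H)

/-- An `H`-coloring of `G`: `f(∂_G(x)) = ∂_H(y)` for every vertex `x` of `G`,
some vertex `y` of `H`. -/
def IsHColoring (G H : Multigraph) (f : G.E → H.E) : Prop :=
  ∀ x : G.V, ∃ y : H.V, (G.star x).image f = H.star y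

/-- The set `V(f)` of vertices of `G` satisfying the `H`-coloring condition under `f`. -/
def colVerts (G H : Multigraph) (f : G.E → H.E) : Set G.V :=
  {x : G.V | ∃ y : H.V, (G.star x).image f = H.star y}

/-- The incidence multiset of a vertex: each incident edge with its multiplicity
(a loop occurs twice). -/
noncomputable def incMultiset (v : G.V) : Multiset G.E :=
  ∑ e : G.E, (G.incCount v e) • ({e} : Multiset G.E)

end Multigraph

/-- The Petersen graph. -/
def Petersen : Multigraph where
  V := Fin 10
  E := {p : Sym2 (Fin 10) //
    p ∈ ({s(0,1), s(1,2), s(2,3), s(3,4), s(4,0),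
          s(0,5), s(1,6), s(2,7), s(3,8), s(4,9),
          s(5,7), s(7,9), s(9,6), s(6,8), s(8,5)} : Finset (Sym2 (Fin 10)))}
  ends := Subtype.val

/-- The Sylvester graph `S` on 10 vertices: a central vertex 0 joined by three
bridges to three end-blocks; each end-block is a 3-vertex multigraph whose two
non-root vertices are joined by a pair of parallel edges. -/
def SylvesterS : Multigraph where
  V := Fin 10
  E := Fin 15
  ends := ![s(0,1), s(1,2), s(1,3), s(2,3), s(2,3),
            s(0,4), s(4,5), s(4,6), s(5,6), s(5,6),
            s(0,7), s(7,8), s(7,9), s(8,9), s(8,9)]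

/-- The Sylvester simple graph `S₁₆` on 16 vertices: central vertex 0 joined by
bridges to three 5-vertex end-blocks with edges
(v1,v2),(v1,v3),(v1,v4),(v2,v3),(v2,v4),(v3,v5),(v4,v5). -/
def Sylvester16 : Multigraph where
  V := Fin 16
  E := {p : Sym2 (Fin 16) //
    p ∈ ({s(1,2), s(1,3), s(1,4), s(2,3), s(2,4), s(3,5), s(4,5), s(0,5),
          s(6,7), s(6,8), s(6,9), s(7,8), s(7,9), s(8,10), s(9,10), s(0,10),
          s(11,12), s(11,13), s(11,14), s(12,13), s(12,14), s(13,15), s(14,15),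
          s(0,15)} : Finset (Sym2 (Fin 16)))}
  ends := Subtype.val

/-- The graph `S'` on 10 vertices: two 5-vertex blocks, each consisting of a
triangle v1v2v3 together with edges (v1,v4),(v2,v4),(v3,v5),(v4,v5), joined by
a bridge between the two degree-2 vertices. -/
def Sprime : Multigraph where
  V := Fin 10
  E := {p : Sym2 (Fin 10) //
    p ∈ ({s(0,1), s(0,2), s(1,2), s(0,3), s(1,3), s(2,4), s(3,4),
          s(5,6), s(5,7), s(6,7), s(5,8), s(6,8), s(7,9), s(8,9),
          s(4,9)} : Finset (Sym2 (Fin 10)))}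
  ends := Subtype.val

/-- The Sylvester pseudo-graph `S₄` on 4 vertices: a central vertex 0 joined to
vertices 1, 2, 3 (edges `a = 0`, `b = 1`, `c = 2`), each of which carries a loop
(`a' = 3`, `b' = 4`, `c' = 5`). -/
def S4 : Multigraph where
  V := Fin 4
  E := Fin 6
  ends := ![s(0,1), s(0,2), s(0,3), s(1,1), s(2,2), s(3,3)]


namespace Multigraph

variable {G : Multigraph}

lemma Loopless.incCount_eq (hl : G.Loopless) (v : G.V) (e : G.E) :
    G.incCount v e = if v ∈ G.ends e then 1 else 0 := by
  have h : G.ends e ≠ Sym2.diag v := fun h => hl e (h ▸ Sym2.diag_isDiag v)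
  simp [incCount, h]

lemma Loopless.card_star (hl : G.Loopless) (v : G.V) : (G.star v).card = G.degree v := by
  simp [degree, star, hl.incCount_eq]

lemma Loopless.exists_ends_eq (hl : G.Loopless) (e : G.E) :
    ∃ a b, a ≠ b ∧ G.ends e = s(a, b) := by
  have h := hl e
  induction hab : G.ends e using Sym2.ind with
  | _ a b => exact ⟨a, b, by simpa [hab] using h, rfl⟩

lemma degIn_add_degIn_compl (A : Set G.E) (v : G.V) :
    G.degIn A v + G.degIn Aᶜ v = G.degree v := by
  rw [degIn, degIn, degree, ← Finset.sum_add_distrib]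
  refine Finset.sum_congr rfl fun e _ => ?_
  by_cases h : e ∈ A <;> simp [h]

variable (G) in
/-- The edges joining `S` to its complement. -/
noncomputable def edgeCut (S : Finset G.V) : Finset G.E :=
  Finset.univ.filter fun e => (∃ v ∈ S, v ∈ G.ends e) ∧ ∃ v ∉ S, v ∈ G.ends e

lemma Loopless.sum_degree_modEq_card_edgeCut (hl : G.Loopless) (S : Finset G.V) :
    ∑ v ∈ S, G.degree v ≡ (G.edgeCut S).card [MOD 2] := by
  simp only [degree]
  rw [Finset.sum_comm, edgeCut, Finset.card_filter]
  refine Nat.ModEq.sum fun e _ => ?_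
  obtain ⟨a, b, hab, he⟩ := hl.exists_ends_eq e
  have key : ∑ v ∈ S, G.incCount v e =
      (if a ∈ S then 1 else 0) + if b ∈ S then 1 else 0 := by
    have h (v : G.V) : G.incCount v e = (if v = a then 1 else 0) + if v = b then 1 else 0 := by
      rw [hl.incCount_eq, he]
      grind
    simp [h, Finset.sum_add_distrib]
  have cross : ((∃ v ∈ S, v ∈ G.ends e) ∧ ∃ v ∉ S, v ∈ G.ends e) ↔ ¬(a ∈ S ↔ b ∈ S) := by
    simp only [he, Sym2.mem_iff]
    grind
  rw [key, if_congr cross rfl rfl]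
  by_cases ha : a ∈ S <;> by_cases hb : b ∈ S <;> simp [ha, hb, Nat.ModEq]

lemma isBridge_of_edgeCut_eq_singleton {S : Finset G.V} {e : G.E} (h : G.edgeCut S = {e}) :
    G.IsBridge e := by
  have closed : ∀ {a b : G.V}, G.Reach {e' | e' ≠ e} a b → (a ∈ S ↔ b ∈ S) := by
    intro a b hr
    induction hr with
    | refl => rfl
    | tail _ hs ih =>
      rename_i c d _
      obtain ⟨e', hne, he'⟩ := hs
      have hn : e' ∉ G.edgeCut S := by simpa [h] using hne
      rw [ih]
      simp only [edgeCut, Finset.mem_filter, Finset.mem_univ, true_and, he', Sym2.mem_iff] at hn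
      grind
  intro u w huw hr
  have hm : e ∈ G.edgeCut S := by simp [h]
  simp only [edgeCut, Finset.mem_filter, Finset.mem_univ, true_and, huw, Sym2.mem_iff] at hm
  have := closed hr
  grind

lemma Loopless.three_le_card_edgeCut (hl : G.Loopless) (hbr : ∀ e, ¬ G.IsBridge e)
    {S : Finset G.V} (hS : Odd S.card) (hdeg : ∀ v ∈ S, G.degree v = 3) :
    3 ≤ (G.edgeCut S).card := by
  have h := hl.sum_degree_modEq_card_edgeCut S
  rw [Finset.sum_congr rfl hdeg, Finset.sum_const, smul_eq_mul, Nat.ModEq] at h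
  have h1 : (G.edgeCut S).card ≠ 1 := fun h1 => by
    obtain ⟨e, he⟩ := Finset.card_eq_one.mp h1
    exact hbr e (isBridge_of_edgeCut_eq_singleton he)
  obtain ⟨k, hk⟩ := hS
  lia

/-- Double counting of the edges between `T` and disjoint odd sets of degree-three vertices
whose edge cuts all end in `T`. -/
lemma Loopless.three_mul_card_le_sum_degree (hl : G.Loopless) (hbr : ∀ e, ¬ G.IsBridge e)
    {ι : Type*} (I : Finset ι) (S : ι → Finset G.V) (T : Finset G.V)
    (hodd : ∀ i ∈ I, Odd (S i).card) (hdeg : ∀ i ∈ I, ∀ v ∈ S i, G.degree v = 3)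
    (hdisj : ∀ i ∈ I, ∀ j ∈ I, ∀ v ∈ S i, v ∈ S j → i = j)
    (hT : ∀ i ∈ I, ∀ v ∈ S i, v ∉ T)
    (hcut : ∀ i ∈ I, ∀ e v w, G.ends e = s(v, w) → v ∈ S i → w ∉ S i → w ∈ T) :
    3 * I.card ≤ ∑ t ∈ T, G.degree t := by
  have hends : ∀ i ∈ I, ∀ e ∈ G.edgeCut (S i), ∃ v ∈ S i, ∃ t ∈ T, G.ends e = s(v, t) := by
    intro i hi e he
    obtain ⟨a, b, -, hab⟩ := hl.exists_ends_eq e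
    have hba := hab.trans Sym2.eq_swap
    simp only [edgeCut, Finset.mem_filter, Finset.mem_univ, true_and, hab, Sym2.mem_iff] at he
    have h1 := hcut i hi e a b hab
    have h2 := hcut i hi e b a hba
    by_cases ha : a ∈ S i
    · exact ⟨a, ha, b, h1 ha (by grind), hab⟩
    · have hb : b ∈ S i := by grind
      exact ⟨b, hb, a, h2 hb ha, hba⟩
  have hpd : (I : Set ι).PairwiseDisjoint fun i => G.edgeCut (S i) := by
    intro i hi j hj hij
    rw [Function.onFun, Finset.disjoint_left]
    intro e hei hej
    obtain ⟨v, hv, t, ht, hvt⟩ := hends i hi e hei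
    obtain ⟨v', hv', t', ht', hvt'⟩ := hends j hj e hej
    rw [hvt, Sym2.eq_iff] at hvt'
    rcases hvt' with ⟨rfl, -⟩ | ⟨rfl, -⟩
    · exact hij (hdisj i hi j hj _ hv hv')
    · exact hT i hi _ hv ht'
  calc 3 * I.card = ∑ _i ∈ I, 3 := by simp [mul_comm]
    _ ≤ ∑ i ∈ I, (G.edgeCut (S i)).card := Finset.sum_le_sum fun i hi =>
        hl.three_le_card_edgeCut hbr (hodd i hi) (hdeg i hi)
    _ = (I.biUnion fun i => G.edgeCut (S i)).card := (Finset.card_biUnion hpd).symm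
    _ ≤ (T.biUnion G.star).card := by
        refine Finset.card_le_card fun e he => ?_
        obtain ⟨i, hi, hei⟩ := Finset.mem_biUnion.mp he
        obtain ⟨v, -, t, ht, hvt⟩ := hends i hi e hei
        exact Finset.mem_biUnion.mpr ⟨t, ht, by simp [star, hvt]⟩
    _ ≤ ∑ t ∈ T, (G.star t).card := Finset.card_biUnion_le
    _ = ∑ t ∈ T, G.degree t := Finset.sum_congr rfl fun t _ => hl.card_star t

variable (G) in
/-- The simple graph underlying `G` with the vertex `x` deleted. -/
def simpleDelete (x : G.V) : SimpleGraph {v : G.V // v ≠ x} where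
  Adj v w := v ≠ w ∧ ∃ e, G.ends e = s(v.1, w.1)
  symm := ⟨fun _ _ ⟨h, e, he⟩ => ⟨h.symm, e, he.trans Sym2.eq_swap⟩⟩
  loopless := ⟨fun _ h => h.1 rfl⟩

lemma Loopless.not_isTutteViolator_simpleDelete (hl : G.Loopless) (hbr : ∀ e, ¬ G.IsBridge e)
    {x : G.V} (hx : G.degree x = 2) (hdeg : ∀ v, v ≠ x → G.degree v = 3)
    (u : Set {v : G.V // v ≠ x}) : ¬ (G.simpleDelete x).IsTutteViolator u := by
  intro hu
  let K := ((⊤ : (G.simpleDelete x).Subgraph).deleteVerts u).coe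
  let f : ((⊤ : (G.simpleDelete x).Subgraph).deleteVerts u).verts → G.V := fun v => v.1.1
  have hf : Function.Injective f := Subtype.val_injective.comp Subtype.val_injective
  let S : K.ConnectedComponent → Finset G.V := fun c => (f '' c.supp).toFinset
  let T : Finset G.V := insert x (u.toFinset.map (Function.Embedding.subtype _))
  have hSmem (c : K.ConnectedComponent) (v : G.V) : v ∈ S c ↔ ∃ k ∈ c.supp, f k = v := by simp [S]
  have hTmem (v : G.V) (hv : v ≠ x) : v ∈ T ↔ ⟨v, hv⟩ ∈ u := by simp [T, hv]
  have hcount := hl.three_mul_card_le_sum_degree hbr K.oddComponents.toFinset S T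
    (by
      intro c hc
      rw [Set.mem_toFinset] at hc
      have : (S c).card = c.supp.ncard := by
        rw [← Set.ncard_eq_toFinset_card', Set.ncard_image_of_injective _ hf]
      rw [this]
      exact hc)
    (by
      intro c _ v hv
      obtain ⟨k, -, rfl⟩ := (hSmem c v).mp hv
      exact hdeg _ k.1.2)
    (by
      intro c _ d _ v hc hd
      obtain ⟨k, hk, rfl⟩ := (hSmem c v).mp hc
      obtain ⟨l, hld, hkl⟩ := (hSmem d _).mp hd
      obtain rfl := hf hkl
      exact hk.symm.trans hld)
    (by
      intro c _ v hv hvT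
      obtain ⟨k, -, rfl⟩ := (hSmem c v).mp hv
      exact k.2.2 ((hTmem _ k.1.2).mp hvT))
    (by
      intro c _ e v w he hv hw
      obtain ⟨k, hk, rfl⟩ := (hSmem c v).mp hv
      by_contra hwT
      have hwx : w ≠ x := fun h => hwT (by simp [T, h])
      have hwu : (⟨w, hwx⟩ : {v : G.V // v ≠ x}) ∉ u := fun h => hwT ((hTmem w hwx).mpr h)
      let l : ((⊤ : (G.simpleDelete x).Subgraph).deleteVerts u).verts := ⟨⟨w, hwx⟩, trivial, hwu⟩
      have hkl : K.Adj k l := by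
        have hne : k.1 ≠ l.1 := fun h => hw ((hSmem c w).mpr ⟨k, hk, congrArg Subtype.val h⟩)
        have hadj : (G.simpleDelete x).Adj k.1 l.1 := ⟨hne, e, he⟩
        simpa [K, k.2.2, l.2.2] using hadj
      exact hw ((hSmem c w).mpr ⟨l, (c.mem_supp_congr_adj hkl).mp hk, rfl⟩))
  have hsum : ∑ t ∈ T, G.degree t = 2 + 3 * u.ncard := by
    rw [Finset.sum_insert (by simp), hx, Finset.sum_map,
      Finset.sum_congr rfl fun v _ => hdeg v.1 v.2, Finset.sum_const, smul_eq_mul,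
      Set.ncard_eq_toFinset_card', mul_comm]
  rw [hsum, ← Set.ncard_eq_toFinset_card'] at hcount
  have : u.ncard < K.oddComponents.ncard := hu
  lia

lemma Loopless.exists_degIn_of_isPerfectMatching (hl : G.Loopless) {x : G.V}
    {M : (G.simpleDelete x).Subgraph} (hM : M.IsPerfectMatching) :
    ∃ B : Set G.E, G.degIn B x = 0 ∧ ∀ v, v ≠ x → G.degIn B v = 1 := by
  have hex : ∀ p ∈ M.edgeSet, ∃ e, G.ends e = p.map Subtype.val := by
    intro p hp
    induction p using Sym2.ind with
    | _ v w => exact (M.adj_sub hp).2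
  choose φ hφ using hex
  refine ⟨{e | ∃ p, ∃ hp : p ∈ M.edgeSet, φ p hp = e}, ?_, fun v hv => ?_⟩
  · refine Finset.sum_eq_zero fun e _ => ?_
    split_ifs with he
    · obtain ⟨p, hp, rfl⟩ := he
      rw [hl.incCount_eq, hφ]
      simp [Sym2.mem_map]
    · rfl
  · obtain ⟨w, hw, huniq⟩ := SimpleGraph.Subgraph.isPerfectMatching_iff.mp hM ⟨v, hv⟩
    have hw' : s(⟨v, hv⟩, w) ∈ M.edgeSet := hw
    rw [degIn, Finset.sum_eq_single (φ s(⟨v, hv⟩, w) hw')]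
    · rw [if_pos ⟨_, hw', rfl⟩, hl.incCount_eq, hφ]
      simp
    · intro e _ hne
      split_ifs with he
      · obtain ⟨p, hp, rfl⟩ := he
        rw [hl.incCount_eq, hφ, if_neg]
        intro hmem
        obtain ⟨a, ha, rfl⟩ := Sym2.mem_map.mp hmem
        obtain ⟨b, rfl⟩ := ha
        obtain rfl := huniq b hp
        exact hne rfl
      · rfl
    · simp

end Multigraph

/-- A bridgeless graph with all degrees 2 or 3 and exactly one
vertex of degree 2 has a 2-factor. -/
theorem bridgeless_one_degree_two_has_two_factor (G : Multigraph)
    (hl : G.Loopless) (hbr : ∀ e : G.E, ¬ G.IsBridge e)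
    (hdeg : ∀ v : G.V, G.degree v = 2 ∨ G.degree v = 3)
    (hone : ∃! v : G.V, G.degree v = 2) :
    ∃ A : Set G.E, G.IsKFactor 2 A := by
  obtain ⟨x, hx, hxu⟩ := hone
  have hdeg3 : ∀ v, v ≠ x → G.degree v = 3 := fun v hv =>
    (hdeg v).resolve_left fun h => hv (hxu v h)
  obtain ⟨M, hM⟩ := SimpleGraph.tutte.mpr (hl.not_isTutteViolator_simpleDelete hbr hx hdeg3)
  obtain ⟨B, hBx, hB⟩ := hl.exists_degIn_of_isPerfectMatching hM
  refine ⟨Bᶜ, fun v => ?_⟩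
  have hsplit := Multigraph.degIn_add_degIn_compl B v
  by_cases hv : v = x
  · subst hv
    lia
  · have := hB v hv
    have := hdeg3 v hv
    lia
end

section
/- Let G be a simple cubic graph with no perfect matching and at most 16 vertices. Then G is isomorphic to the Sylvester graph S_16 on 16 vertices. -/
open scoped Classical

namespace SimpleGraph

/-- A finite graph on an even number of vertices without a perfect matching has a set `u` of
vertices and at least `u.card + 2` pairwise disjoint odd vertex sets, all of whose outgoing
edges end in `u`. -/
lemma exists_odd_family_of_no_perfectMatching {V : Type} [Fintype V] (H : SimpleGraph V)
    (heven : Even (Fintype.card V)) (h : ∀ M : H.Subgraph, ¬ M.IsPerfectMatching) :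
    ∃ (u : Finset V) (ι : Type) (_ : Fintype ι) (S : ι → Finset V),
      u.card + 2 ≤ Fintype.card ι ∧ (∀ i, Odd (S i).card) ∧ (∀ i, Disjoint (S i) u) ∧
      Pairwise (fun i j => Disjoint (S i) (S j)) ∧
      ∀ i, ∀ v ∈ S i, ∀ w, H.Adj v w → w ∈ u ∨ w ∈ S i := by
  rw [← Nat.card_eq_fintype_card] at heven
  obtain ⟨u, hu⟩ := exists_isTutteViolator h heven
  set T := ((⊤ : H.Subgraph).deleteVerts u).coe with hT
  have hodd := odd_ncard_oddComponents T
  have hcardT : Nat.card ((⊤ : H.Subgraph).deleteVerts u).verts + u.ncard = Nat.card V := by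
    have hverts : ((⊤ : H.Subgraph).deleteVerts u).verts = uᶜ := by ext; simp
    rw [hverts, Nat.card_coe_set_eq, add_comm, Set.ncard_add_ncard_compl]
  refine ⟨u.toFinset, T.oddComponents, inferInstance,
    fun K => (Subtype.val '' K.1.supp).toFinset, ?_, ?_, ?_, ?_, ?_⟩
  · rw [← Set.ncard_eq_toFinset_card', ← Nat.card_eq_fintype_card, Nat.card_coe_set_eq]
    have hu' : u.ncard < T.oddComponents.ncard := hu
    rw [Nat.odd_iff, Nat.odd_iff] at hodd
    rw [Nat.even_iff] at heven
    lia
  · intro K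
    rw [← Set.ncard_eq_toFinset_card', Set.ncard_image_of_injective _ Subtype.val_injective]
    exact K.2
  · intro K
    rw [Set.disjoint_toFinset, Set.disjoint_left]
    rintro _ ⟨x, -, rfl⟩
    have := x.2
    simp_all
  · intro K L hKL
    rw [Set.disjoint_toFinset, Set.disjoint_image_iff Subtype.val_injective]
    exact pairwise_disjoint_supp_connectedComponent _ (Subtype.coe_injective.ne hKL)
  · intro K v hv w hvw
    rw [Set.mem_toFinset] at hv
    obtain ⟨x, hx, rfl⟩ := hv
    by_cases hw : w ∈ u
    · exact Or.inl (by simpa using hw)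
    · right
      rw [Set.mem_toFinset]
      refine ⟨⟨w, by simpa using hw⟩, ?_, rfl⟩
      have hadj : T.Adj x ⟨w, by simpa using hw⟩ := by
        have := x.2
        simp_all
      exact (K.1.mem_supp_congr_adj hadj).mp hx

section Counting

variable {V : Type} [Fintype V] (H : SimpleGraph V)

lemma even_sum_card_adj_inside (S : Finset V) :
    Even (∑ v ∈ S, (S.filter (H.Adj v)).card) := by
  let K : SimpleGraph V :=
    { Adj := fun a b => H.Adj a b ∧ a ∈ S ∧ b ∈ S
      symm := ⟨fun _ _ h => ⟨h.1.symm, h.2.2, h.2.1⟩⟩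
      loopless := ⟨fun a h => H.loopless.irrefl a h.1⟩ }
  have hdeg : ∑ v, K.degree v = ∑ v ∈ S, (S.filter (H.Adj v)).card := by
    rw [← Finset.sum_subset (Finset.subset_univ S)]
    · refine Finset.sum_congr rfl fun v hv => ?_
      rw [← card_neighborFinset_eq_degree]
      congr 1
      ext w
      simp [K, hv, and_comm]
    · intro v _ hv
      rw [← card_neighborFinset_eq_degree, Finset.card_eq_zero]
      ext w
      simp [K, hv]
  rw [← hdeg, K.sum_degrees_eq_twice_card_edges]
  exact even_two_mul _

variable {H}

lemma inside_add_cut_eq (hreg : ∀ v, (Finset.univ.filter (H.Adj v)).card = 3)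
    {S u : Finset V} (hdisj : Disjoint S u)
    (hout : ∀ v ∈ S, ∀ w, H.Adj v w → w ∈ u ∨ w ∈ S) :
    ∑ v ∈ S, (S.filter (H.Adj v)).card + ∑ v ∈ S, (u.filter (H.Adj v)).card = 3 * S.card := by
  rw [← Finset.sum_add_distrib, mul_comm, ← smul_eq_mul, ← Finset.sum_const]
  refine Finset.sum_congr rfl fun v hv => ?_
  rw [← hreg v, ← Finset.card_union_of_disjoint (Finset.disjoint_filter_filter hdisj)]
  congr 1
  ext w
  have := hout v hv w
  simp only [Finset.mem_union, Finset.mem_filter, Finset.mem_univ, true_and]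
  tauto

/-- An odd set in a cubic simple graph is joined to its complement by an odd number of edges;
this number is at least three if the set has fewer than five vertices. -/
lemma seven_le_card_add_two_mul_cut (hreg : ∀ v, (Finset.univ.filter (H.Adj v)).card = 3)
    {S u : Finset V} (hodd : Odd S.card) (hdisj : Disjoint S u)
    (hout : ∀ v ∈ S, ∀ w, H.Adj v w → w ∈ u ∨ w ∈ S) :
    1 ≤ ∑ v ∈ S, (u.filter (H.Adj v)).card ∧
      7 ≤ S.card + 2 * ∑ v ∈ S, (u.filter (H.Adj v)).card := by
  have hsum := inside_add_cut_eq hreg hdisj hout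
  have heven := even_sum_card_adj_inside H S
  have hle : ∑ v ∈ S, (S.filter (H.Adj v)).card ≤ S.card * (S.card - 1) := by
    rw [← smul_eq_mul, ← Finset.sum_const]
    refine Finset.sum_le_sum fun v hv => ?_
    rw [← Finset.card_erase_of_mem hv]
    refine Finset.card_le_card fun w hw => ?_
    rw [Finset.mem_filter] at hw
    exact Finset.mem_erase.mpr ⟨hw.2.ne', hw.1⟩
  rw [Nat.even_iff] at heven
  rw [Nat.odd_iff] at hodd
  refine ⟨by lia, ?_⟩
  by_cases h5 : 5 ≤ S.card
  · lia
  · have h13 : S.card = 1 ∨ S.card = 3 := by lia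
    rcases h13 with h | h <;> rw [h] at hle hsum ⊢ <;> lia

lemma sum_cut_le (hreg : ∀ v, (Finset.univ.filter (H.Adj v)).card = 3)
    {ι : Type} [Fintype ι] {S : ι → Finset V} (u : Finset V)
    (hS : Pairwise (fun i j => Disjoint (S i) (S j))) :
    ∑ i, ∑ v ∈ S i, (u.filter (H.Adj v)).card ≤ 3 * u.card := by
  rw [← Finset.sum_biUnion (fun i _ j _ hij => hS hij)]
  refine (Finset.sum_le_sum_of_subset (Finset.subset_univ _)).trans ?_
  have hcount := Finset.sum_card_bipartiteAbove_eq_sum_card_bipartiteBelow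
    (s := Finset.univ) (t := u) H.Adj
  simp only [Finset.bipartiteAbove, Finset.bipartiteBelow] at hcount
  rw [hcount, mul_comm, ← smul_eq_mul, ← Finset.sum_const]
  refine Finset.sum_le_sum fun w _ => ?_
  rw [← hreg w]
  simp only [H.adj_comm w, le_refl]

/-- A cubic simple graph on at most sixteen vertices without a perfect matching splits into a
vertex `c` and three sets of five vertices, each of which has exactly one edge to `c` and no
other outgoing edge. -/
lemma exists_center_of_no_perfectMatching
    (hreg : ∀ v, (Finset.univ.filter (H.Adj v)).card = 3)
    (h : ∀ M : H.Subgraph, ¬ M.IsPerfectMatching) (hcard : Fintype.card V ≤ 16) :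
    ∃ (c : V) (S : Fin 3 → Finset V), Fintype.card V = 16 ∧ (∀ i, (S i).card = 5) ∧
      (∀ i, c ∉ S i) ∧ Pairwise (fun i j => Disjoint (S i) (S j)) ∧
      (∀ i, ∀ v ∈ S i, ∀ w, H.Adj v w → w = c ∨ w ∈ S i) ∧
      ∀ i, ((S i).filter (H.Adj c)).card = 1 := by
  have heven : Even (Fintype.card V) := by
    have hdeg := H.sum_degrees_eq_twice_card_edges
    have hthree : ∑ v, H.degree v = 3 * Fintype.card V := by
      rw [mul_comm, ← smul_eq_mul, ← Finset.card_univ, ← Finset.sum_const]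
      refine Finset.sum_congr rfl fun v _ => ?_
      rw [← hreg v, ← card_neighborFinset_eq_degree, neighborFinset_eq_filter]
    rw [Nat.even_iff]
    lia
  obtain ⟨u, ι, _, S, hu, hodd, hdisj, hpair, hout⟩ :=
    H.exists_odd_family_of_no_perfectMatching heven h
  set d : ι → ℕ := fun i => ∑ v ∈ S i, (u.filter (H.Adj v)).card with hd
  have hd1 : ∀ i, 1 ≤ d i := fun i =>
    (seven_le_card_add_two_mul_cut hreg (hodd i) (hdisj i) (hout i)).1
  have hd7 : ∀ i, 7 ≤ (S i).card + 2 * d i := fun i =>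
    (seven_le_card_add_two_mul_cut hreg (hodd i) (hdisj i) (hout i)).2
  have hdsum : ∑ i, d i ≤ 3 * u.card := sum_cut_le hreg u hpair
  have hSsum : ∑ i, (S i).card + u.card ≤ Fintype.card V := by
    rw [← Finset.card_biUnion (fun i _ j _ hij => hpair hij),
      ← Finset.card_union_of_disjoint ((Finset.disjoint_biUnion_left _ _ _).mpr
        fun i _ => hdisj i)]
    exact Finset.card_le_univ _
  have hq1 : Fintype.card ι ≤ ∑ i, d i := by
    simpa using Finset.sum_le_sum fun i (_ : i ∈ Finset.univ) => hd1 i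
  have hq7 : 7 * Fintype.card ι ≤ ∑ i, (S i).card + 2 * ∑ i, d i := by
    rw [Finset.mul_sum, ← Finset.sum_add_distrib]
    simpa [mul_comm] using Finset.sum_le_sum fun i (_ : i ∈ Finset.univ) => hd7 i
  have hu1 : u.card = 1 := by lia
  have hι : Fintype.card ι = 3 := by lia
  have hdeq : ∀ i, d i = 1 := by
    have hs : ∑ i : ι, 1 = ∑ i, d i := by
      rw [Finset.sum_const, Finset.card_univ, smul_eq_mul]
      lia
    intro i
    exact ((Finset.sum_eq_sum_iff_of_le fun i _ => hd1 i).mp hs i (Finset.mem_univ i)).symm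
  have hSeq : ∀ i, (S i).card = 5 := by
    have h5 : ∀ i ∈ Finset.univ, 5 ≤ (S i).card := fun i _ => by
      have := hd7 i
      rw [hdeq i] at this
      lia
    have hs : ∑ i : ι, 5 = ∑ i, (S i).card := by
      refine le_antisymm (Finset.sum_le_sum h5) ?_
      rw [Finset.sum_const, Finset.card_univ, smul_eq_mul]
      lia
    intro i
    exact ((Finset.sum_eq_sum_iff_of_le h5).mp hs i (Finset.mem_univ i)).symm
  obtain ⟨c, rfl⟩ := Finset.card_eq_one.mp hu1
  let e : Fin 3 ≃ ι := (Fintype.equivFinOfCardEq hι).symm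
  refine ⟨c, S ∘ e, by lia, fun i => hSeq _, fun i => ?_, fun i j hij => hpair (e.injective.ne hij),
    fun i v hv w hvw => ?_, fun i => ?_⟩
  · simpa using hdisj (e i)
  · simpa using hout (e i) v hv w hvw
  · have hone := hdeq (e i)
    simp only [hd, Finset.filter_singleton, apply_ite Finset.card, Finset.card_singleton,
      Finset.card_empty, ← Finset.card_filter] at hone
    simpa only [Function.comp_apply, H.adj_comm c] using hone

/-- The adjacency relation of an end-block of the Sylvester graph, on the vertices `v1`, …, `v5`
numbered from `0`. -/
def blockAdj (a b : Fin 5) : Prop :=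
  s(a, b) ∈ ({s(0, 1), s(0, 2), s(0, 3), s(1, 2), s(1, 3), s(2, 4), s(3, 4)} :
    Finset (Sym2 (Fin 5)))

lemma exists_block_parametrization
    (hreg : ∀ v, (Finset.univ.filter (H.Adj v)).card = 3) {c : V} {S : Finset V}
    (hS : S.card = 5) (hc : c ∉ S)
    (hout : ∀ v ∈ S, ∀ w, H.Adj v w → w = c ∨ w ∈ S)
    (hone : (S.filter (H.Adj c)).card = 1) :
    ∃ g : Fin 5 → V, Function.Injective g ∧ (∀ a, g a ∈ S) ∧
      (∀ a b, H.Adj (g a) (g b) ↔ blockAdj a b) ∧ ∀ a, H.Adj c (g a) ↔ a = 4 := by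
  have hN : ∀ v w, w ∈ Finset.univ.filter (H.Adj v) ↔ H.Adj v w := by simp
  obtain ⟨x, hx⟩ := Finset.card_eq_one.mp hone
  have hcx : ∀ v, v ∈ S ∧ H.Adj c v ↔ v = x := fun v => by
    rw [← Finset.mem_filter, hx, Finset.mem_singleton]
  obtain ⟨hxS, hxc⟩ := (hcx x).mpr rfl
  have hxN : ((Finset.univ.filter (H.Adj x)).erase c).card = 2 := by
    rw [Finset.card_erase_of_mem (by simpa using hxc.symm), hreg]
  obtain ⟨p, q, hpq, hxpq⟩ := Finset.card_eq_two.mp hxN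
  have hx' : ∀ v, v ≠ c ∧ H.Adj x v ↔ v = p ∨ v = q := fun v => by
    rw [← hN x, ← Finset.mem_erase, hxpq, Finset.mem_insert, Finset.mem_singleton]
  obtain ⟨hpc, hxp⟩ := (hx' p).mpr (Or.inl rfl)
  obtain ⟨hqc, hxq⟩ := (hx' q).mpr (Or.inr rfl)
  have hpS : p ∈ S := (hout x hxS p hxp).resolve_left hpc
  have hqS : q ∈ S := (hout x hxS q hxq).resolve_left hqc
  have hrest : (S \ {x, p, q}).card = 2 := by
    rw [Finset.card_sdiff_of_subset (by simp [Finset.insert_subset_iff, hxS, hpS, hqS]), hS,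
      Finset.card_eq_three.mpr ⟨x, p, q, hxp.ne, hxq.ne, hpq, rfl⟩]
  obtain ⟨r, t, hrt, hrtS⟩ := Finset.card_eq_two.mp hrest
  have hS' : ∀ v, v ∈ S ∧ ¬ (v = x ∨ v = p ∨ v = q) ↔ v = r ∨ v = t := fun v => by
    simpa using Finset.ext_iff.mp hrtS v
  obtain ⟨hrS, hr⟩ := (hS' r).mpr (Or.inl rfl)
  obtain ⟨htS, ht⟩ := (hS' t).mpr (Or.inr rfl)
  push Not at hr ht
  have hbound : ∀ v ∈ S, v ≠ x → ∀ w, H.Adj v w → w ∈ S := fun v hv hvx w hw =>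
    (hout v hv w hw).resolve_left fun hwc => hvx ((hcx v).mp ⟨hv, hwc ▸ hw.symm⟩)
  have hrN : Finset.univ.filter (H.Adj r) = {p, q, t} := by
    refine Finset.eq_of_subset_of_card_le (fun w hw => ?_) (by rw [hreg]; exact Finset.card_le_three)
    rw [hN] at hw
    have := hbound r hrS hr.1 w hw
    have := hS' w
    have := hx' r
    have := hw.ne
    have := hw.symm
    simp only [Finset.mem_insert, Finset.mem_singleton]
    grind
  have htN : Finset.univ.filter (H.Adj t) = {p, q, r} := by
    refine Finset.eq_of_subset_of_card_le (fun w hw => ?_) (by rw [hreg]; exact Finset.card_le_three)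
    rw [hN] at hw
    have := hbound t htS ht.1 w hw
    have := hS' w
    have := hx' t
    have := hw.ne
    have := hw.symm
    simp only [Finset.mem_insert, Finset.mem_singleton]
    grind
  have hr' : ∀ w, H.Adj r w ↔ w = p ∨ w = q ∨ w = t := fun w => by
    rw [← hN, hrN]
    simp
  have ht' : ∀ w, H.Adj t w ↔ w = p ∨ w = q ∨ w = r := fun w => by
    rw [← hN, htN]
    simp
  have hpN : ({x, r, t} : Finset V) = Finset.univ.filter (H.Adj p) := by
    refine Finset.eq_of_subset_of_card_le (fun w hw => ?_) ?_
    · rw [hN]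
      simp only [Finset.mem_insert, Finset.mem_singleton] at hw
      rcases hw with rfl | rfl | rfl
      · exact hxp.symm
      · exact ((hr' p).mpr (by simp)).symm
      · exact ((ht' p).mpr (by simp)).symm
    · rw [hreg, Finset.card_eq_three.mpr ⟨x, r, t, hr.1.symm, ht.1.symm, hrt, rfl⟩]
  have hpq' : ¬ H.Adj p q := by
    rw [← hN, ← hpN]
    simp only [Finset.mem_insert, Finset.mem_singleton]
    have := hxq.ne
    grind
  have hcv : ∀ v ∈ S, v ≠ x → ¬ H.Adj c v := fun v hv hvx hcv => hvx ((hcx v).mp ⟨hv, hcv⟩)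
  have hrp := (hr' p).mpr (by simp)
  have hrq := (hr' q).mpr (by simp)
  have hrt' := (hr' t).mpr (by simp)
  have htp := (ht' p).mpr (by simp)
  have htq := (ht' q).mpr (by simp)
  have hrx : ¬ H.Adj r x := by rw [hr']; grind
  have htx : ¬ H.Adj t x := by rw [ht']; grind
  refine ⟨![r, t, p, q, x], ?_, ?_, ?_, ?_⟩
  · intro a b hab
    fin_cases a <;> fin_cases b <;> simp_all
  · intro a
    fin_cases a <;> simp [*]
  · intro a b
    fin_cases a <;> fin_cases b <;>
      simp [blockAdj, hrp, hrq, hrt', htp, htq, hrx, htx, hxp, hxq, hpq', hrp.symm, hrq.symm,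
        hrt'.symm, htp.symm, htq.symm, hxp.symm, hxq.symm, H.adj_comm x r, H.adj_comm x t,
        H.adj_comm q p]
  · intro a
    fin_cases a <;> simp [hxc, hcv r hrS hr.1, hcv t htS ht.1, hcv p hpS hxp.ne', hcv q hqS hxq.ne']

end Counting

end SimpleGraph

namespace Sylvester16

/-- The set of edges of the Sylvester graph on sixteen vertices. -/
def edgePairs : Finset (Sym2 (Fin 16)) :=
  {s(1,2), s(1,3), s(1,4), s(2,3), s(2,4), s(3,5), s(4,5), s(0,5),
    s(6,7), s(6,8), s(6,9), s(7,8), s(7,9), s(8,10), s(9,10), s(0,10),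
    s(11,12), s(11,13), s(11,14), s(12,13), s(12,14), s(13,15), s(14,15), s(0,15)}

/-- Adjacency in the Sylvester graph, with `none` as the central vertex and `some (i, a)` as the
vertex `a` of the end-block `i`. -/
def blockModelAdj : Option (Fin 3 × Fin 5) → Option (Fin 3 × Fin 5) → Prop
  | none, none => False
  | none, some p => p.2 = 4
  | some p, none => p.2 = 4
  | some p, some q => p.1 = q.1 ∧ SimpleGraph.blockAdj p.2 q.2

/-- The numbering of the vertices of the Sylvester graph. -/
def blockModelEquiv : Option (Fin 3 × Fin 5) ≃ Fin 16 :=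
  (Equiv.optionCongr finProdFinEquiv).trans (finSuccEquiv 15).symm

lemma blockModelAdj_iff (o o' : Option (Fin 3 × Fin 5)) :
    blockModelAdj o o' ↔ s(blockModelEquiv o, blockModelEquiv o') ∈ edgePairs := by
  rcases o with _ | ⟨i, a⟩ <;> rcases o' with _ | ⟨j, b⟩ <;>
    simp only [blockModelAdj, SimpleGraph.blockAdj, edgePairs, blockModelEquiv]
  · decide
  · revert j b
    decide
  · revert i a
    decide
  · revert i a j b
    decide

end Sylvester16

namespace Multigraph

variable (G : Multigraph)

/-- The adjacency graph of a multigraph. -/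
def toSimpleGraph : SimpleGraph G.V where
  Adj a b := a ≠ b ∧ ∃ e, G.ends e = s(a, b)
  symm := ⟨fun _ _ h => ⟨h.1.symm, by simpa only [Sym2.eq_swap] using h.2⟩⟩
  loopless := ⟨fun _ h => h.1 rfl⟩

variable {G}

lemma Simple.ne_of_ends_eq (hs : G.Simple) {e : G.E} {a b : G.V} (h : G.ends e = s(a, b)) :
    a ≠ b := by
  rintro rfl
  exact hs.1 e (by rw [h]; rfl)

lemma Simple.toSimpleGraph_adj (hs : G.Simple) {a b : G.V} :
    G.toSimpleGraph.Adj a b ↔ ∃ e, G.ends e = s(a, b) :=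
  ⟨fun h => h.2, fun ⟨e, he⟩ => ⟨hs.ne_of_ends_eq he, e, he⟩⟩

variable (G)

lemma card_toSimpleGraph_adj (hs : G.Simple) (hc : G.Cubic) (v : G.V) :
    (Finset.univ.filter (G.toSimpleGraph.Adj v)).card = 3 := by
  have hstar : (G.star v).card = 3 := by
    rw [← hc.2 v, degree, star, Finset.card_filter]
    refine Finset.sum_congr rfl fun e _ => ?_
    have hne : G.ends e ≠ Sym2.diag v := fun h => hs.1 e (by rw [h]; exact Sym2.diag_isDiag v)
    rw [incCount, if_neg hne]
  rw [← hstar]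
  symm
  refine Finset.card_bij (fun e he => Sym2.Mem.other (Finset.mem_filter.mp he).2) ?_ ?_ ?_
  · intro e he
    rw [Finset.mem_filter, hs.toSimpleGraph_adj]
    exact ⟨Finset.mem_univ _, e, (Sym2.other_spec _).symm⟩
  · intro e he e' he' h
    refine hs.2 e e' ?_
    rw [← Sym2.other_spec (Finset.mem_filter.mp he).2, h, Sym2.other_spec]
  · intro w hw
    rw [Finset.mem_filter, hs.toSimpleGraph_adj] at hw
    obtain ⟨-, e, he⟩ := hw
    have hv : v ∈ G.ends e := by simp [he]
    refine ⟨e, Finset.mem_filter.mpr ⟨Finset.mem_univ _, hv⟩, ?_⟩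
    exact Sym2.congr_right.mp ((Sym2.other_spec hv).trans he)

lemma isPerfectMatching_of_toSimpleGraph (hs : G.Simple) {M : G.toSimpleGraph.Subgraph}
    (hM : M.IsPerfectMatching) : G.IsPerfectMatching {e | G.ends e ∈ M.edgeSet} := by
  rw [SimpleGraph.Subgraph.isPerfectMatching_iff] at hM
  refine ⟨fun e he e' he' hne => ?_, fun v => ?_⟩
  · rintro ⟨v, hv, hv'⟩
    obtain ⟨w, hw⟩ := Sym2.mem_iff_exists.mp hv
    obtain ⟨w', hw'⟩ := Sym2.mem_iff_exists.mp hv'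
    rw [Set.mem_ofPred_eq, hw, SimpleGraph.Subgraph.mem_edgeSet] at he
    rw [Set.mem_ofPred_eq, hw', SimpleGraph.Subgraph.mem_edgeSet] at he'
    refine hne (hs.2 e e' ?_)
    rw [hw, hw', (hM v).unique he he']
  · obtain ⟨w, hw, -⟩ := hM v
    obtain ⟨-, e, he⟩ := hw.adj_sub
    refine ⟨e, ?_, by simp [he]⟩
    rw [Set.mem_ofPred_eq, he]
    exact hw

lemma isIsomorphicTo_sylvester16_of_adj (hs : G.Simple) (φ : G.V ≃ Fin 16)
    (h : ∀ v w, G.toSimpleGraph.Adj v w ↔ s(φ v, φ w) ∈ Sylvester16.edgePairs) :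
    G.IsIsomorphicTo Sylvester16 := by
  have hmem : ∀ e, (G.ends e).map φ ∈ Sylvester16.edgePairs := fun e => by
    obtain ⟨v, w, hvw⟩ : ∃ v w, G.ends e = s(v, w) :=
      Sym2.ind (fun v w => ⟨v, w, rfl⟩) (G.ends e)
    rw [hvw, Sym2.map_mk]
    exact (h v w).mp (hs.toSimpleGraph_adj.mpr ⟨e, hvw⟩)
  let F : G.E → {p : Sym2 (Fin 16) // p ∈ Sylvester16.edgePairs} :=
    fun e => ⟨(G.ends e).map φ, hmem e⟩
  have hF : Function.Bijective F := by
    refine ⟨fun e e' hee => hs.2 e e' (Sym2.map.injective φ.injective (Subtype.ext_iff.mp hee)), ?_⟩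
    rintro ⟨p, hp⟩
    induction p with | _ a b
    obtain ⟨e, he⟩ := hs.toSimpleGraph_adj.mp
      ((h (φ.symm a) (φ.symm b)).mpr (by simpa using hp))
    exact ⟨e, Subtype.ext (by simp [F, he])⟩
  exact ⟨⟨φ, Equiv.ofBijective F hF, fun _ => rfl⟩⟩

end Multigraph

/-- a simple cubic graph with no perfect matching and at most 16
vertices is the Sylvester graph S₁₆. -/
theorem no_perfect_matching_le_sixteen_is_sylvester16 (G : Multigraph)
    (hs : G.Simple) (hc : G.Cubic)
    (hpm : ¬ ∃ M : Set G.E, G.IsPerfectMatching M)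
    (hcard : Fintype.card G.V ≤ 16) :
    Multigraph.IsIsomorphicTo G Sylvester16 := by
  have hreg := G.card_toSimpleGraph_adj hs hc
  obtain ⟨c, S, hV, hS, hcS, hpair, hout, hone⟩ :=
    SimpleGraph.exists_center_of_no_perfectMatching hreg
      (fun M hM => hpm ⟨_, G.isPerfectMatching_of_toSimpleGraph hs hM⟩) hcard
  choose g hginj hgS hgadj hgc using fun i =>
    SimpleGraph.exists_block_parametrization hreg (hS i) (hcS i) (hout i) (hone i)
  have hdisj : ∀ i j a, g i a ∈ S j → i = j := fun i j a h => by
    by_contra hij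
    exact Finset.disjoint_left.mp (hpair hij) (hgS i a) h
  let f : Option (Fin 3 × Fin 5) → G.V := fun o => o.elim c fun p => g p.1 p.2
  have hfinj : Function.Injective f := by
    rintro (_ | ⟨i, a⟩) (_ | ⟨j, b⟩) h
    · rfl
    · have h' : c = g j b := h
      exact (hcS j (h' ▸ hgS j b)).elim
    · have h' : g i a = c := h
      exact (hcS i (h' ▸ hgS i a)).elim
    · have h' : g i a = g j b := h
      obtain rfl := hdisj i j a (h' ▸ hgS j b)
      rw [hginj i h']
  have hfbij : Function.Bijective f :=
    (Fintype.bijective_iff_injective_and_card f).mpr ⟨hfinj, by rw [hV]; rfl⟩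
  have hfadj : ∀ o o', G.toSimpleGraph.Adj (f o) (f o') ↔ Sylvester16.blockModelAdj o o' := by
    rintro (_ | ⟨i, a⟩) (_ | ⟨j, b⟩)
    · simp [f, Sylvester16.blockModelAdj]
    · exact hgc j b
    · exact (G.toSimpleGraph.adj_comm _ _).trans (hgc i a)
    · change G.toSimpleGraph.Adj (g i a) (g j b) ↔ i = j ∧ SimpleGraph.blockAdj a b
      constructor
      · intro h
        have hj : g j b ∈ S i := (hout i _ (hgS i a) _ h).resolve_left
          fun hbc => hcS j (hbc ▸ hgS j b)
        obtain rfl := hdisj j i b hj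
        exact ⟨rfl, (hgadj j a b).mp h⟩
      · rintro ⟨rfl, h⟩
        exact (hgadj i a b).mpr h
  refine G.isIsomorphicTo_sylvester16_of_adj hs
    ((Equiv.ofBijective f hfbij).symm.trans Sylvester16.blockModelEquiv) fun v w => ?_
  obtain ⟨o, rfl⟩ := hfbij.2 v
  obtain ⟨o', rfl⟩ := hfbij.2 w
  rw [hfadj, Sylvester16.blockModelAdj_iff]
  simp
end

section
/- The Petersen graph does not admit an S'-coloring in which every edge of S' is used, where S' is the non-3-edge-colorable simple cubic graph on 10 vertices containing a bridge. -/
open scoped Classical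

namespace Multigraph

variable {G H : Multigraph}

@[simp]
theorem mem_star {v : G.V} {e : G.E} : e ∈ G.star v ↔ v ∈ G.ends e := by
  simp [star]

/-- For an injective coloring, incidence in `H` pulls back to incidence in `G`. -/
theorem mem_ends_of_image_star_eq {f : G.E → H.E} (hf : Function.Injective f) {x : G.V} {y : H.V}
    (h : (G.star x).image f = H.star y) {e : G.E} (he : y ∈ H.ends (f e)) : x ∈ G.ends e := by
  rw [← mem_star, ← h, hf.mem_finset_image, mem_star] at he
  exact he

/-- An injective and surjective `H`-coloring pulls triangles of `H` back to triangles of `G`,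
provided that stars in `G` determine their vertices and `G`, `H` have equally many vertices. -/
theorem TriangleFree.of_bijective_coloring {f : G.E → H.E} (hG : G.TriangleFree)
    (hstar : Function.Injective G.star) (hcard : Fintype.card G.V = Fintype.card H.V)
    (hcol : IsHColoring G H f) (hf : Function.Bijective f) : H.TriangleFree := by
  rintro ⟨e₁, e₂, e₃, u, v, w, huv, hvw, huw, h₁, h₂, h₃⟩
  choose g hg using hcol
  have hginj : Function.Injective g := fun x y hxy =>
    hstar (Finset.image_injective hf.injective (by rw [hg, hg, hxy]))
  have hgsurj : Function.Surjective g :=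
    ((Fintype.bijective_iff_injective_and_card g).2 ⟨hginj, hcard⟩).surjective
  obtain ⟨e₁, rfl⟩ := hf.surjective e₁
  obtain ⟨e₂, rfl⟩ := hf.surjective e₂
  obtain ⟨e₃, rfl⟩ := hf.surjective e₃
  obtain ⟨u, rfl⟩ := hgsurj u
  obtain ⟨v, rfl⟩ := hgsurj v
  obtain ⟨w, rfl⟩ := hgsurj w
  have hends : ∀ {e x y}, g x ≠ g y → H.ends (f e) = s(g x, g y) → G.ends e = s(x, y) :=
    fun {e x y} hxy he => (Sym2.mem_and_mem_iff (ne_of_apply_ne g hxy)).1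
      ⟨mem_ends_of_image_star_eq hf.injective (hg x) (by simp [he]),
        mem_ends_of_image_star_eq hf.injective (hg y) (by simp [he])⟩
  exact hG ⟨e₁, e₂, e₃, u, v, w, ne_of_apply_ne g huv, ne_of_apply_ne g hvw,
    ne_of_apply_ne g huw, hends huv h₁, hends hvw h₂, hends huw h₃⟩

end Multigraph

theorem card_petersen_edges : Fintype.card Petersen.E = 15 := by
  rw [← Nat.card_eq_fintype_card]
  refine (Nat.card_eq_fintype_card.trans (Fintype.card_coe _)).trans ?_
  decide

theorem card_sprime_edges : Fintype.card Sprime.E = 15 := by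
  rw [← Nat.card_eq_fintype_card]
  refine (Nat.card_eq_fintype_card.trans (Fintype.card_coe _)).trans ?_
  decide

theorem petersen_triangleFree : Petersen.TriangleFree := by
  have key : ∀ u v w : Fin 10, ∀ E : Finset (Sym2 (Fin 10)),
      E = {s(0,1), s(1,2), s(2,3), s(3,4), s(4,0),
          s(0,5), s(1,6), s(2,7), s(3,8), s(4,9),
          s(5,7), s(7,9), s(9,6), s(6,8), s(8,5)} →
      ¬ (s(u, v) ∈ E ∧ s(v, w) ∈ E ∧ s(u, w) ∈ E) := by
    simp only [forall_eq]
    decide +kernel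
  rintro ⟨⟨e₁, m₁⟩, ⟨e₂, m₂⟩, ⟨e₃, m₃⟩, u, v, w, -, -, -, h₁, h₂, h₃⟩
  change e₁ = _ at h₁
  change e₂ = _ at h₂
  change e₃ = _ at h₃
  subst h₁ h₂ h₃
  exact key u v w _ rfl ⟨m₁, m₂, m₃⟩

/-- Every vertex of the Petersen graph is determined by two of its incident edges. -/
theorem petersen_star_injective : Function.Injective Petersen.star := by
  have key : ∀ x y : Fin 10, (∀ e : {p : Sym2 (Fin 10) //
    p ∈ ({s(0,1), s(1,2), s(2,3), s(3,4), s(4,0),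
          s(0,5), s(1,6), s(2,7), s(3,8), s(4,9),
          s(5,7), s(7,9), s(9,6), s(6,8), s(8,5)} : Finset (Sym2 (Fin 10)))},
      x ∈ e.1 → y ∈ e.1) → x = y := by decide +kernel
  exact fun x y h => key x y fun e he =>
    Multigraph.mem_star.1 (h ▸ (Multigraph.mem_star (G := Petersen) (v := x) (e := e)).2 he)

theorem not_sprime_triangleFree : ¬ Sprime.TriangleFree := fun h =>
  h ⟨⟨s(0, 1), by decide⟩, ⟨s(1, 2), by decide⟩, ⟨s(0, 2), by decide⟩,
    (0 : Fin 10), (1 : Fin 10), (2 : Fin 10),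
    show (0 : Fin 10) ≠ 1 by decide, show (1 : Fin 10) ≠ 2 by decide,
    show (0 : Fin 10) ≠ 2 by decide, rfl, rfl, rfl⟩

/-- the Petersen graph admits no S'-coloring in which every edge
of S' is used. -/
theorem petersen_admits_no_surjective_sprime_coloring :
    ¬ ∃ f : Petersen.E → Sprime.E,
      Multigraph.IsHColoring Petersen Sprime f ∧
      ∀ e : Sprime.E, ∃ e' : Petersen.E, f e' = e := by
  rintro ⟨f, hcol, hf⟩
  have hbij : Function.Bijective f := (Fintype.bijective_iff_surjective_and_card f).2
    ⟨hf, card_petersen_edges.trans card_sprime_edges.symm⟩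
  exact not_sprime_triangleFree
    (petersen_triangleFree.of_bijective_coloring petersen_star_injective rfl hcol hbij)
end
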